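/- arXiv:2310.00494 — 6 statements merged into one kernel-verified Lean document; each statement's English description precedes it below -/
import Mathlib

section
/- For every d ≥ 1 and every 1 ≤ b ≤ d, the twin star graph TS_d(2b-1,2b) is a spanning tree of the complete graph K_{2d} (it is connected, acyclic, and has exactly 2d-1 edges), its edge set equals {(i,j) : 1 ≤ i < j ≤ 2d, ind(i,j) = b}, and the tuple (TS_d(1,2), TS_d(3,4), ..., TS_d(2d-1,2d)) is a homogeneous cycle-free edge d-partition of K_{2d}. -/
open SimpleGraph

/-- Vertices of `K_{2d}` are `Fin (2*d)`, with `v : Fin (2*d)` representing the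
1-based vertex `v + 1`.  For `i < j`, `indF i j` is the 0-based version of the index
`ind(i+1, j+1)`, where (1-based) `ind(x,y) = ⌈x/2⌉` if `x + y` is even and `⌈y/2⌉` if
`x + y` is odd. -/
def indF {d : ℕ} (i j : Fin (2*d)) : Fin d :=
  if ((i : ℕ) + (j : ℕ)) % 2 = 0 then ⟨(i : ℕ) / 2, by have := i.isLt; omega⟩
  else ⟨(j : ℕ) / 2, by have := j.isLt; omega⟩

/-- Column indices of a `d × d(2d-1)` matrix: pairs `(i,j)` with `i < j` in `Fin (2*d)`. -/
abbrev EdgePair (d : ℕ) := {p : Fin (2*d) × Fin (2*d) // p.1 < p.2}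

def ind {d : ℕ} (e : EdgePair d) : Fin d := indF e.val.1 e.val.2

/-- An edge `d`-partition of `K_{2d}`: spanning subgraphs with pairwise disjoint edge
sets whose union is the edge set of the complete graph. -/
def IsEdgePartition {d : ℕ} (Γ : Fin d → SimpleGraph (Fin (2*d))) : Prop :=
  (∀ a b : Fin d, a ≠ b → Disjoint (Γ a).edgeSet (Γ b).edgeSet) ∧
  (⋃ a : Fin d, (Γ a).edgeSet) = (⊤ : SimpleGraph (Fin (2*d))).edgeSet

/-- A homogeneous cycle-free edge `d`-partition of `K_{2d}`. -/
def IsHCFPartition {d : ℕ} (Γ : Fin d → SimpleGraph (Fin (2*d))) : Prop :=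
  IsEdgePartition Γ ∧ (∀ a b : Fin d, (Γ a).edgeSet.ncard = (Γ b).edgeSet.ncard) ∧
  (∀ a : Fin d, (Γ a).IsAcyclic)

/-- The edge `d`-partition `Γ^E` associated with `E^{(2)}_d`:
`E(Γ^E_a) = {(i,j) : i < j, ind(i,j) = a}`. -/
def GammaE (d : ℕ) (a : Fin d) : SimpleGraph (Fin (2*d)) :=
  SimpleGraph.fromEdgeSet {e | ∃ i j : Fin (2*d), i < j ∧ indF i j = a ∧ e = s(i,j)}

-- The monomial `M_Γ(A) = ∏_{a=1}^d ∏_{(i,j) ∈ E(Γ_a)} A^a_{i,j}`.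
open scoped Classical in
noncomputable def MGamma {d : ℕ} {k : Type*} [Field k]
    (Γ : Fin d → SimpleGraph (Fin (2*d))) (A : Fin d → EdgePair d → k) : k :=
  ∏ a : Fin d, ∏ e : EdgePair d, if (Γ a).Adj e.val.1 e.val.2 then A a e else 1

/-- `A` is `S²`-upper triangular: entries strictly below the `S²`-diagonal vanish. -/
def S2UpperTriangular {d : ℕ} {k : Type*} [Field k] (A : Fin d → EdgePair d → k) : Prop :=
  ∀ (r : Fin d) (e : EdgePair d), ind e < r → A r e = 0

/-- `A` is `S²`-lower triangular: entries strictly above the `S²`-diagonal vanish. -/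
def S2LowerTriangular {d : ℕ} {k : Type*} [Field k] (A : Fin d → EdgePair d → k) : Prop :=
  ∀ (r : Fin d) (e : EdgePair d), r < ind e → A r e = 0

/-- The matrix form `I^{S²}_d` of `E^{(2)}_d`. -/
def IS2 (d : ℕ) (k : Type*) [Field k] : Fin d → EdgePair d → k :=
  fun r e => if r = ind e then 1 else 0

/-- The twin star graph TS_d(2b-1, 2b) (0-based: star centers 2b and 2b+1),
with its left legs, central edge, and right legs. -/
def TS (d : ℕ) (b : Fin d) : SimpleGraph (Fin (2*d)) :=
  SimpleGraph.fromEdgeSet {e | ∃ i j : Fin (2*d), i < j ∧ e = s(i,j) ∧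
    ((∃ a : Fin d, a < b ∧ (i : ℕ) = 2*a+1 ∧ (j : ℕ) = 2*b) ∨
     (∃ c : Fin d, b < c ∧ (i : ℕ) = 2*b ∧ (j : ℕ) = 2*c) ∨
     ((i : ℕ) = 2*b ∧ (j : ℕ) = 2*b+1) ∨
     (∃ a : Fin d, a < b ∧ (i : ℕ) = 2*a ∧ (j : ℕ) = 2*b+1) ∨
     (∃ c : Fin d, b < c ∧ (i : ℕ) = 2*b+1 ∧ (j : ℕ) = 2*c+1))}

lemma indF_eq_iff {d : ℕ} (i j : Fin (2*d)) (b : Fin d) : indF i j = b ↔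
    (((i : ℕ) + (j : ℕ)) % 2 = 0 ∧ (i : ℕ) / 2 = b) ∨
    (((i : ℕ) + (j : ℕ)) % 2 = 1 ∧ (j : ℕ) / 2 = b) := by
  unfold indF
  split_ifs with h <;> simp only [Fin.ext_iff] <;> omega

lemma TS_edgeSet (d : ℕ) (b : Fin d) :
    (TS d b).edgeSet = {e | ∃ i j : Fin (2*d), i < j ∧ indF i j = b ∧ e = s(i,j)} := by
  ext e
  unfold TS
  rw [edgeSet_fromEdgeSet]
  simp only [Set.mem_sdiff, Set.mem_ofPred_eq]
  constructor
  · rintro ⟨⟨i, j, hij, rfl, h⟩, -⟩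
    refine ⟨i, j, hij, ?_, rfl⟩
    rw [indF_eq_iff]
    simp only [Fin.lt_def] at h
    rcases h with ⟨a, h⟩ | ⟨a, h⟩ | h | ⟨a, h⟩ | ⟨a, h⟩ <;> omega
  · rintro ⟨i, j, hij, h, rfl⟩
    refine ⟨⟨i, j, hij, rfl, ?_⟩, ?_⟩
    · rw [indF_eq_iff] at h
      have hi := i.isLt
      have hj := j.isLt
      rw [Fin.lt_def] at hij
      simp only [Fin.lt_def]
      by_cases h1 : (j : ℕ) = 2 * b
      · exact Or.inl ⟨⟨i / 2, by omega⟩, by dsimp only; omega, by dsimp only; omega, h1⟩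
      by_cases h2 : (i : ℕ) = 2 * b
      · by_cases h3 : (j : ℕ) = 2 * b + 1
        · exact Or.inr (Or.inr (Or.inl ⟨h2, h3⟩))
        · exact Or.inr (Or.inl ⟨⟨j / 2, by omega⟩, by dsimp only; omega, h2, by dsimp only; omega⟩)
      by_cases h3 : (j : ℕ) = 2 * b + 1
      · exact Or.inr (Or.inr (Or.inr (Or.inl
          ⟨⟨i / 2, by omega⟩, by dsimp only; omega, by dsimp only; omega, h3⟩)))
      · exact Or.inr (Or.inr (Or.inr (Or.inr
          ⟨⟨j / 2, by omega⟩, by dsimp only; omega, by omega, by dsimp only; omega⟩)))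
    · simpa using hij.ne

/-- Parent of a vertex in the twin star rooted at `2b`. -/
def tsParent {d : ℕ} (b : Fin d) (v : Fin (2*d)) : Fin (2*d) :=
  if (v : ℕ) = 2*b+1 ∨ ((v : ℕ) < 2*b ∧ (v : ℕ) % 2 = 1) ∨ (2*(b:ℕ)+1 < v ∧ (v : ℕ) % 2 = 0)
  then ⟨2*b, by omega⟩ else ⟨2*b+1, by omega⟩

lemma tsParent_val {d : ℕ} (b : Fin d) (v : Fin (2*d)) :
    (((v : ℕ) = 2*b+1 ∨ ((v : ℕ) < 2*b ∧ (v : ℕ) % 2 = 1) ∨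
      (2*(b:ℕ)+1 < v ∧ (v : ℕ) % 2 = 0)) ∧ (tsParent b v : ℕ) = 2*b) ∨
    (¬ ((v : ℕ) = 2*b+1 ∨ ((v : ℕ) < 2*b ∧ (v : ℕ) % 2 = 1) ∨
      (2*(b:ℕ)+1 < v ∧ (v : ℕ) % 2 = 0)) ∧ (tsParent b v : ℕ) = 2*b+1) := by
  unfold tsParent
  split_ifs with h
  · exact Or.inl ⟨h, rfl⟩
  · exact Or.inr ⟨h, rfl⟩

lemma TS_edgeSet_image (d : ℕ) (b : Fin d) :
    (TS d b).edgeSet =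
    Set.image (fun v => s(v, tsParent b v)) {v : Fin (2*d) | (v : ℕ) ≠ 2*b} := by
  rw [TS_edgeSet]
  ext e
  simp only [Set.mem_ofPred_eq, Set.mem_image]
  constructor
  · rintro ⟨i, j, hij, h, rfl⟩
    rw [indF_eq_iff] at h
    rw [Fin.lt_def] at hij
    by_cases hj : (j : ℕ) / 2 = b ∧ (i : ℕ) / 2 ≠ b
    · refine ⟨i, by omega, ?_⟩
      have := tsParent_val b i
      have h2 : tsParent b i = j := Fin.ext (by omega)
      rw [h2]
    · refine ⟨j, by omega, ?_⟩
      have := tsParent_val b j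
      have h2 : tsParent b j = i := Fin.ext (by omega)
      rw [h2, Sym2.eq_swap]
  · rintro ⟨v, hv, rfl⟩
    have := tsParent_val b v
    rcases lt_or_ge v (tsParent b v) with h | h
    · refine ⟨_, _, h, ?_, rfl⟩
      rw [Fin.lt_def] at h
      rw [indF_eq_iff]; omega
    · rw [Fin.le_def] at h
      refine ⟨tsParent b v, v, ?_, ?_, Sym2.eq_swap⟩
      · rw [Fin.lt_def]; omega
      · rw [indF_eq_iff]; omega

lemma TS_ncard (d : ℕ) (b : Fin d) : (TS d b).edgeSet.ncard = 2*d - 1 := by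
  rw [TS_edgeSet_image, Set.ncard_image_of_injOn]
  · have : {v : Fin (2*d) | (v : ℕ) ≠ 2*b} = {(⟨2*b, by omega⟩ : Fin (2*d))}ᶜ := by
      ext v; simp [Fin.ext_iff]
    rw [this, Set.ncard_compl]; simp
  · intro v hv w hw h
    simp only [Set.mem_ofPred_eq] at hv hw
    simp only [Sym2.eq_iff, Fin.ext_iff] at h
    have := tsParent_val b v
    have := tsParent_val b w
    apply Fin.ext; omega

lemma TS_adj_parent (d : ℕ) (b : Fin d) (v : Fin (2*d)) (hv : (v : ℕ) ≠ 2*b) :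
    (TS d b).Adj v (tsParent b v) := by
  rw [← mem_edgeSet, TS_edgeSet_image]
  exact ⟨v, hv, rfl⟩

lemma TS_connected (d : ℕ) (b : Fin d) : (TS d b).Connected := by
  rw [connected_iff_exists_forall_reachable]
  refine ⟨⟨2*b, by omega⟩, fun v => Reachable.symm ?_⟩
  by_cases hv : (v : ℕ) = 2*b
  · have : v = ⟨2*b, by omega⟩ := Fin.ext hv
    rw [this]
  have h1 := (TS_adj_parent d b v hv).reachable
  rcases tsParent_val b v with ⟨_, h⟩ | ⟨_, h⟩
  · have : tsParent b v = ⟨2*b, by omega⟩ := Fin.ext h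
    rwa [this] at h1
  · refine h1.trans ?_
    have h2 := (TS_adj_parent d b (tsParent b v) (by omega)).reachable
    have h3 := tsParent_val b (tsParent b v)
    have : tsParent b (tsParent b v) = ⟨2*b, by omega⟩ := Fin.ext (by dsimp only; omega)
    rwa [this] at h2

lemma TS_acyclic (d : ℕ) (b : Fin d) : (TS d b).IsAcyclic := by
  have : (TS d b).IsTree := by
    rw [isTree_iff_connected_and_card]
    refine ⟨TS_connected d b, ?_⟩
    have := b.isLt
    rw [Nat.card_coe_set_eq, TS_ncard, Nat.card_eq_fintype_card, Fintype.card_fin]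
    omega
  exact this.isAcyclic

/-- For every d ≥ 1 and b, the twin star graph TS_d(2b-1,2b) is a spanning tree of
K_{2d} (connected, acyclic, with exactly 2d - 1 edges), its edge set is
{(i,j) : i < j, ind(i,j) = b}, and (TS_d(1,2), …, TS_d(2d-1,2d)) is a homogeneous
cycle-free edge d-partition of K_{2d}. -/
theorem twin_star_spanning_tree_partition (d : ℕ) (hd : 1 ≤ d) (b : Fin d) :
    (TS d b).Connected ∧ (TS d b).IsAcyclic ∧ (TS d b).edgeSet.ncard = 2*d - 1 ∧
    (TS d b).edgeSet = {e | ∃ i j : Fin (2*d), i < j ∧ indF i j = b ∧ e = s(i,j)} ∧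
    IsHCFPartition (fun b' : Fin d => TS d b') := by
  refine ⟨TS_connected d b, TS_acyclic d b, TS_ncard d b, TS_edgeSet d b, ⟨?_, ?_⟩, ?_, ?_⟩
  · intro a c hac
    rw [Set.disjoint_left]
    intro e he hc
    simp only [TS_edgeSet, Set.mem_ofPred_eq] at he hc
    obtain ⟨i, j, hij, hi, rfl⟩ := he
    obtain ⟨k, l, hkl, hk, h⟩ := hc
    rw [Sym2.eq_iff] at h
    rcases h with ⟨rfl, rfl⟩ | ⟨rfl, rfl⟩
    · exact hac (hi.symm.trans hk)
    · exact absurd hij hkl.not_gt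
  · ext e
    induction e using Sym2.ind with
    | _ x y =>
      simp only [TS_edgeSet, Set.mem_iUnion, Set.mem_ofPred_eq, mem_edgeSet, top_adj]
      constructor
      · rintro ⟨a, i, j, hij, -, h⟩ rfl
        rw [Sym2.eq_iff] at h
        rcases h with ⟨rfl, rfl⟩ | ⟨rfl, rfl⟩ <;> exact lt_irrefl _ hij
      · intro h
        rcases lt_or_gt_of_ne h with h | h
        · exact ⟨_, x, y, h, rfl, rfl⟩
        · exact ⟨_, y, x, h, rfl, Sym2.eq_swap⟩
  · intro a c
    simp only [TS_ncard]
  · exact fun a => TS_acyclic d a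
end

section
/- Let d ≥ 1, let Γ = (Γ_1,...,Γ_d) be a homogeneous cycle-free edge d-partition of the complete graph K_{2d}, and let 1 ≤ x < y < z ≤ 2d. Then there exists a unique homogeneous cycle-free edge d-partition Λ = (Λ_1,...,Λ_d) of K_{2d} with Λ ≠ Γ such that for every edge (i,j) of K_{2d} other than (x,y), (x,z), (y,z), the edge (i,j) belongs to Λ_a if and only if it belongs to Γ_a (for every 1 ≤ a ≤ d); that is, Λ agrees with Γ on all edges except on the triangle with vertices x, y, z. -/
open SimpleGraph

section Helpers

variable {V : Type*}

lemma reach_sup_edge {G : SimpleGraph V} {u v s t : V} (h : (G ⊔ edge u v).Reachable s t) :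
    G.Reachable s t ∨ (G.Reachable s u ∧ G.Reachable v t) ∨
      (G.Reachable s v ∧ G.Reachable u t) := by
  obtain ⟨w⟩ := h
  induction w with
  | nil => exact Or.inl (Reachable.refl _)
  | cons hadj _ ih =>
    rename_i a b c _
    rw [sup_adj, edge_adj] at hadj
    rcases hadj with hadj | ⟨⟨rfl, rfl⟩ | ⟨rfl, rfl⟩, -⟩
    · have := hadj.reachable
      rcases ih with ih | ⟨h1, h2⟩ | ⟨h1, h2⟩
      · exact Or.inl (this.trans ih)
      · exact Or.inr (Or.inl ⟨this.trans h1, h2⟩)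
      · exact Or.inr (Or.inr ⟨this.trans h1, h2⟩)
    · rcases ih with ih | ⟨h1, h2⟩ | ⟨h1, h2⟩
      · exact Or.inr (Or.inl ⟨Reachable.refl _, ih⟩)
      · exact Or.inr (Or.inl ⟨Reachable.refl _, h2⟩)
      · exact Or.inl h2
    · rcases ih with ih | ⟨h1, h2⟩ | ⟨h1, h2⟩
      · exact Or.inr (Or.inr ⟨Reachable.refl _, ih⟩)
      · exact Or.inl h2
      · exact Or.inr (Or.inr ⟨Reachable.refl _, h2⟩)

lemma edge_reach (G : SimpleGraph V) (x y : V) : (G ⊔ edge x y).Reachable x y := by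
  by_cases h : x = y
  · subst h; exact Reachable.refl _
  · exact Adj.reachable (by simp [edge_adj, h])

lemma one_edge {G : SimpleGraph V} {x y : V} (hne : x ≠ y) (hn : ¬ G.Adj x y)
    (h : (G ⊔ edge x y).IsAcyclic) : ¬ G.Reachable x y := by
  rw [isAcyclic_sup_fromEdgeSet_iff] at h
  grind

lemma two_edge_acyclic {G : SimpleGraph V} {x y z : V} (hG : G.IsAcyclic)
    (hA : ¬ G.Reachable x y) (hB : ¬ G.Reachable x z) (hC : ¬ G.Reachable y z) :
    (G ⊔ edge x y ⊔ edge x z).IsAcyclic := by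
  refine (hG.sup_edge_of_not_reachable hA).sup_edge_of_not_reachable ?_
  intro h
  rcases reach_sup_edge h with h | ⟨_, h⟩ | ⟨h, _⟩
  · exact hB h
  · exact hC h
  · exact hA h

lemma two_edge_not {G : SimpleGraph V} {x y z : V} (hxy : x ≠ y) (hxz : x ≠ z) (hyz : y ≠ z)
    (h1 : ¬ G.Adj x y) (h2 : ¬ G.Adj x z)
    (h : (G ⊔ edge x y ⊔ edge x z).IsAcyclic) :
    ¬ G.Reachable x y ∧ ¬ G.Reachable x z ∧ ¬ G.Reachable y z := by
  have h3 : ¬ (G ⊔ edge x y).Reachable x z := by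
    apply one_edge hxz _ h
    simp only [sup_adj, edge_adj]; grind
  refine ⟨one_edge hxy h1 (h.anti le_sup_left), fun h4 => h3 (h4.mono le_sup_left), fun h4 => ?_⟩
  exact h3 ((edge_reach G x y).trans (h4.mono le_sup_left))

/-- `F` with some of the triangle edges added. -/
def tg (F : SimpleGraph V) (x y z : V) (P Q R : Prop) : SimpleGraph V where
  Adj u v := F.Adj u v ∨ (P ∧ (edge x y).Adj u v) ∨ (Q ∧ (edge x z).Adj u v) ∨
    (R ∧ (edge y z).Adj u v)
  symm := ⟨by
    intro u v h
    simpa only [F.adj_comm v u, (edge x y).adj_comm v u, (edge x z).adj_comm v u,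
      (edge y z).adj_comm v u] using h⟩
  loopless := ⟨by intro u h; simp at h⟩

structure NoTri (F : SimpleGraph V) (x y z : V) : Prop where
  hxy : x ≠ y
  hxz : x ≠ z
  hyz : y ≠ z
  nxy : ¬ F.Adj x y
  nxz : ¬ F.Adj x z
  nyz : ¬ F.Adj y z

lemma tg_acyclic_iff {F : SimpleGraph V} {x y z : V} (P Q R : Prop) (hF : F.IsAcyclic)
    (h : NoTri F x y z) :
    (tg F x y z P Q R).IsAcyclic ↔
      ¬ (P ∧ Q ∧ R) ∧ (P → ¬ F.Reachable x y) ∧ (Q → ¬ F.Reachable x z) ∧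
      (R → ¬ F.Reachable y z) ∧ (P ∧ Q → ¬ F.Reachable y z) ∧ (P ∧ R → ¬ F.Reachable x z) ∧
      (Q ∧ R → ¬ F.Reachable x y) := by
  obtain ⟨hxy, hxz, hyz, n1, n2, n3⟩ := h
  have c1 : F.Reachable y x ↔ F.Reachable x y := reachable_comm
  have c2 : F.Reachable z x ↔ F.Reachable x z := reachable_comm
  have c3 : F.Reachable z y ↔ F.Reachable y z := reachable_comm
  have a1 := F.adj_comm x y
  have a2 := F.adj_comm x z
  have a3 := F.adj_comm y z
  by_cases hP : P <;> by_cases hQ : Q <;> by_cases hR : R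
  · have : ¬ (tg F x y z P Q R).IsAcyclic := by
      intro h
      have e : tg F x y z P Q R = F ⊔ edge x y ⊔ edge x z ⊔ edge y z := by
        ext u v; simp [tg, hP, hQ, hR, or_assoc]
      rw [e] at h
      refine one_edge hyz ?_ h ?_
      · simp only [sup_adj, edge_adj]; grind
      · exact ((edge_reach F x y).symm.mono le_sup_left).trans (edge_reach _ x z)
    exact iff_of_false this (fun h => h.1 ⟨hP, hQ, hR⟩)
  · have e : tg F x y z P Q R = F ⊔ edge x y ⊔ edge x z := by
      ext u v; simp [tg, hP, hQ, hR, or_assoc]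
    have := @two_edge_acyclic V F x y z hF
    have := @two_edge_not V F x y z hxy hxz hyz n1 n2
    rw [e]; grind
  · have e : tg F x y z P Q R = F ⊔ edge y x ⊔ edge y z := by
      ext u v; simp [tg, hP, hQ, hR, or_assoc, edge_comm y x]
    have := @two_edge_acyclic V F y x z hF
    have := @two_edge_not V F y x z hxy.symm hyz hxz (by grind) n3
    rw [e]; grind
  · have e : tg F x y z P Q R = F ⊔ edge x y := by
      ext u v; simp [tg, hP, hQ, hR]
    have := @IsAcyclic.sup_edge_of_not_reachable V F x y
    have := @one_edge V F x y hxy n1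
    rw [e]; grind
  · have e : tg F x y z P Q R = F ⊔ edge z x ⊔ edge z y := by
      ext u v; simp [tg, hP, hQ, hR, or_assoc, edge_comm z x, edge_comm z y]
    have := @two_edge_acyclic V F z x y hF
    have := @two_edge_not V F z x y hxz.symm hyz.symm hxy (by grind) (by grind)
    rw [e]; grind
  · have e : tg F x y z P Q R = F ⊔ edge x z := by
      ext u v; simp [tg, hP, hQ, hR]
    have := @IsAcyclic.sup_edge_of_not_reachable V F x z
    have := @one_edge V F x z hxz n2
    rw [e]; grind
  · have e : tg F x y z P Q R = F ⊔ edge y z := by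
      ext u v; simp [tg, hP, hQ, hR]
    have := @IsAcyclic.sup_edge_of_not_reachable V F y z
    have := @one_edge V F y z hyz n3
    rw [e]; grind
  · have e : tg F x y z P Q R = F := by
      ext u v; simp [tg, hP, hQ, hR]
    rw [e]; grind

open scoped Classical in
lemma tg_ncard [Finite V] {F : SimpleGraph V} {x y z : V} (P Q R : Prop) (h : NoTri F x y z) :
    (tg F x y z P Q R).edgeSet.ncard = F.edgeSet.ncard + ((if P then 1 else 0) +
      (if Q then 1 else 0) + (if R then 1 else 0)) := by
  obtain ⟨hxy, hxz, hyz, n1, n2, n3⟩ := h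
  have e : (tg F x y z P Q R).edgeSet = ((F.edgeSet ∪ (if P then {s(x,y)} else ∅)) ∪
      (if Q then {s(x,z)} else ∅)) ∪ (if R then {s(y,z)} else ∅) := by
    ext e
    induction e with | _ u v
    by_cases hP : P <;> by_cases hQ : Q <;> by_cases hR : R <;>
      simp [tg, hP, hQ, hR, edge_adj] <;> grind [SimpleGraph.ne_of_adj]
  have key : ∀ (S : Set (Sym2 V)) (e : Sym2 V) (P : Prop), e ∉ S →
      (S ∪ (if P then {e} else ∅)).ncard = S.ncard + (if P then 1 else 0) := by
    intro S e P he
    split_ifs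
    · rw [Set.union_singleton, Set.ncard_insert_of_notMem he (Set.toFinite _)]
    · simp
  rw [e, key, key, key]
  · omega
  · simpa using n1
  · simp; grind
  · simp; grind

lemma acyclic_ncard_le [Finite V] [Nonempty V] {G : SimpleGraph V} (h : G.IsAcyclic) :
    G.edgeSet.ncard + 1 ≤ Nat.card V := by
  obtain ⟨T, hGT, -, hT⟩ := connected_top.exists_isTree_le_of_le_of_isAcyclic le_top h
  have := (isTree_iff_connected_and_card.1 hT).2
  have h2 := Set.ncard_le_ncard (edgeSet_mono hGT) (Set.toFinite _)
  rw [Nat.card_coe_set_eq] at this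
  omega

/-- The triple `(p', q', r')` is a rearrangement of `(p, q, r)`. -/
def Rearr {α : Type*} (p q r p' q' r' : α) : Prop :=
  (p' = p ∧ q' = q ∧ r' = r) ∨ (p' = p ∧ q' = r ∧ r' = q) ∨ (p' = q ∧ q' = p ∧ r' = r) ∨
  (p' = q ∧ q' = r ∧ r' = p) ∨ (p' = r ∧ q' = p ∧ r' = q) ∨ (p' = r ∧ q' = q ∧ r' = p)

open scoped Classical in
lemma rearr_iff {α : Type*} (p q r p' q' r' : α) :
    Rearr p q r p' q' r' ↔ ∀ c, ((if p' = c then 1 else 0) + (if q' = c then 1 else 0) +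
      (if r' = c then 1 else 0) : ℕ) = (if p = c then 1 else 0) + (if q = c then 1 else 0) +
      (if r = c then 1 else 0) := by
  constructor
  · rintro (⟨rfl, rfl, rfl⟩ | ⟨rfl, rfl, rfl⟩ | ⟨rfl, rfl, rfl⟩ | ⟨rfl, rfl, rfl⟩ |
      ⟨rfl, rfl, rfl⟩ | ⟨rfl, rfl, rfl⟩) <;> intro c <;> omega
  · intro h
    have h1 := h p
    have h2 := h q
    have h3 := h r
    unfold Rearr
    clear h
    by_cases a1 : p' = p <;> by_cases a2 : p' = q <;> by_cases a3 : p' = r <;>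
      by_cases b1 : q' = p <;> by_cases b2 : q' = q <;> by_cases b3 : q' = r <;> grind

def Good {α : Type*} (A B C : α → Prop) (p q r : α) : Prop :=
  ∀ c, ¬ (p = c ∧ q = c ∧ r = c) ∧ (p = c → ¬ A c) ∧ (q = c → ¬ B c) ∧
      (r = c → ¬ C c) ∧ (p = c ∧ q = c → ¬ C c) ∧ (p = c ∧ r = c → ¬ B c) ∧
      (q = c ∧ r = c → ¬ A c)

lemma comb {α : Type*} (A B C : α → Prop) (p q r : α)
    (t1 : ∀ c, A c → B c → C c) (t2 : ∀ c, A c → C c → B c) (t3 : ∀ c, B c → C c → A c)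
    (hg : Good A B C p q r)
    (o1 : p ≠ q → p ≠ r → A p ∨ B p ∨ C p) (o2 : q ≠ p → q ≠ r → A q ∨ B q ∨ C q)
    (o3 : r ≠ p → r ≠ q → A r ∨ B r ∨ C r) :
    ∃ p' q' r', (Rearr p q r p' q' r' ∧ Good A B C p' q' r' ∧ ¬ (p' = p ∧ q' = q ∧ r' = r)) ∧
      ∀ p'' q'' r'', (Rearr p q r p'' q'' r'' ∧ Good A B C p'' q'' r'' ∧
        ¬ (p'' = p ∧ q'' = q ∧ r'' = r)) → p'' = p' ∧ q'' = q' ∧ r'' = r' := by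
  have g1 := hg p
  have g2 := hg q
  have g3 := hg r
  have hgood : ∀ p' q' r', Rearr p q r p' q' r' →
      (Good A B C p' q' r' ↔ ¬ A p' ∧ ¬ B q' ∧ ¬ C r') := by
    intro p' q' r' h
    constructor
    · intro h
      exact ⟨(h p').2.1 rfl, (h q').2.2.1 rfl, (h r').2.2.2.1 rfl⟩
    · rintro ⟨h1, h2, h3⟩ c
      clear t1 t2 t3 o1 o2 o3 hg
      rcases h with ⟨rfl, rfl, rfl⟩ | ⟨rfl, rfl, rfl⟩ | ⟨rfl, rfl, rfl⟩ | ⟨rfl, rfl, rfl⟩ |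
        ⟨rfl, rfl, rfl⟩ | ⟨rfl, rfl, rfl⟩ <;> refine ⟨?_, ?_, ?_, ?_, ?_, ?_, ?_⟩ <;> grind
  have main : ∃ p' q' r', (Rearr p q r p' q' r' ∧ (¬ A p' ∧ ¬ B q' ∧ ¬ C r') ∧
        ¬ (p' = p ∧ q' = q ∧ r' = r)) ∧
      ∀ p'' q'' r'', (Rearr p q r p'' q'' r'' ∧ (¬ A p'' ∧ ¬ B q'' ∧ ¬ C r'') ∧
        ¬ (p'' = p ∧ q'' = q ∧ r'' = r)) → p'' = p' ∧ q'' = q' ∧ r'' = r' := by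
    have a1 := t1 p
    have a2 := t2 p
    have a3 := t3 p
    have b1 := t1 q
    have b2 := t2 q
    have b3 := t3 q
    have c1 := t1 r
    have c2 := t2 r
    have c3 := t3 r
    have ex : (¬ A p ∧ ¬ B r ∧ ¬ C q ∧ q ≠ r) ∨ (¬ A q ∧ ¬ B p ∧ ¬ C r ∧ p ≠ q) ∨
        (¬ A q ∧ ¬ B r ∧ ¬ C p ∧ ¬ (q = p ∧ r = q)) ∨
        (¬ A r ∧ ¬ B p ∧ ¬ C q ∧ ¬ (r = p ∧ p = q)) ∨
        (¬ A r ∧ ¬ B q ∧ ¬ C p ∧ p ≠ r) := by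
      clear hgood hg t1 t2 t3
      grind
    clear hgood hg t1 t2 t3
    rcases ex with h | h | h | h | h
    · refine ⟨p, r, q, ⟨by unfold Rearr; grind, by grind, by grind⟩, ?_⟩
      rintro p'' q'' r'' ⟨h1, h2, h3⟩
      rcases h1 with ⟨rfl, rfl, rfl⟩ | ⟨rfl, rfl, rfl⟩ | ⟨rfl, rfl, rfl⟩ | ⟨rfl, rfl, rfl⟩ | ⟨rfl, rfl, rfl⟩ | ⟨rfl, rfl, rfl⟩ <;> grind
    · refine ⟨q, p, r, ⟨by unfold Rearr; grind, by grind, by grind⟩, ?_⟩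
      rintro p'' q'' r'' ⟨h1, h2, h3⟩
      rcases h1 with ⟨rfl, rfl, rfl⟩ | ⟨rfl, rfl, rfl⟩ | ⟨rfl, rfl, rfl⟩ | ⟨rfl, rfl, rfl⟩ | ⟨rfl, rfl, rfl⟩ | ⟨rfl, rfl, rfl⟩ <;> grind
    · refine ⟨q, r, p, ⟨by unfold Rearr; grind, by grind, by grind⟩, ?_⟩
      rintro p'' q'' r'' ⟨h1, h2, h3⟩
      rcases h1 with ⟨rfl, rfl, rfl⟩ | ⟨rfl, rfl, rfl⟩ | ⟨rfl, rfl, rfl⟩ | ⟨rfl, rfl, rfl⟩ | ⟨rfl, rfl, rfl⟩ | ⟨rfl, rfl, rfl⟩ <;> grind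
    · refine ⟨r, p, q, ⟨by unfold Rearr; grind, by grind, by grind⟩, ?_⟩
      rintro p'' q'' r'' ⟨h1, h2, h3⟩
      rcases h1 with ⟨rfl, rfl, rfl⟩ | ⟨rfl, rfl, rfl⟩ | ⟨rfl, rfl, rfl⟩ | ⟨rfl, rfl, rfl⟩ | ⟨rfl, rfl, rfl⟩ | ⟨rfl, rfl, rfl⟩ <;> grind
    · refine ⟨r, q, p, ⟨by unfold Rearr; grind, by grind, by grind⟩, ?_⟩
      rintro p'' q'' r'' ⟨h1, h2, h3⟩
      rcases h1 with ⟨rfl, rfl, rfl⟩ | ⟨rfl, rfl, rfl⟩ | ⟨rfl, rfl, rfl⟩ | ⟨rfl, rfl, rfl⟩ | ⟨rfl, rfl, rfl⟩ | ⟨rfl, rfl, rfl⟩ <;> grind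
  obtain ⟨p', q', r', ⟨m1, m2, m3⟩, m4⟩ := main
  refine ⟨p', q', r', ⟨m1, (hgood _ _ _ m1).2 m2, m3⟩, ?_⟩
  rintro p'' q'' r'' ⟨n1, n2, n3⟩
  exact m4 _ _ _ ⟨n1, (hgood _ _ _ n1).1 n2, n3⟩

lemma isEdgePartition_iff {d : ℕ} (Γ : Fin d → SimpleGraph (Fin (2*d))) :
    IsEdgePartition Γ ↔ ∀ i j, i ≠ j → ∃! a, (Γ a).Adj i j := by
  unfold IsEdgePartition
  constructor
  · rintro ⟨h1, h2⟩ i j hij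
    have h3 : s(i,j) ∈ ⋃ a : Fin d, (Γ a).edgeSet := by rw [h2]; simpa using hij
    rw [Set.mem_iUnion] at h3
    obtain ⟨a, ha⟩ := h3
    refine ⟨a, ha, fun b hb => ?_⟩
    by_contra hne
    exact Set.disjoint_left.1 (h1 b a hne) hb ha
  · intro h
    constructor
    · intro a b hab
      rw [Set.disjoint_left]
      intro e
      induction e with | _ i j
      intro ha hb
      exact hab ((h i j (SimpleGraph.ne_of_adj _ ha)).unique ha hb)
    · ext e
      induction e with | _ i j
      simp only [Set.mem_iUnion, mem_edgeSet, top_adj]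
      exact ⟨fun ⟨a, ha⟩ => ha.ne, fun hij => (h i j hij).exists⟩

lemma hcf_ncard {d : ℕ} {Γ : Fin d → SimpleGraph (Fin (2*d))} (h : IsHCFPartition Γ) (a : Fin d) :
    (Γ a).edgeSet.ncard + 1 = 2 * d := by
  classical
  obtain ⟨⟨h1, h2⟩, h3, -⟩ := h
  have hd : 0 < d := a.pos
  have e : (⋃ a : Fin d, (Γ a).edgeSet).ncard = ∑ a, (Γ a).edgeSet.ncard := by
    rw [Set.ncard_iUnion_of_finite (fun _ => Set.toFinite _) (fun a b hab => h1 a b hab)]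
    exact finsum_eq_sum_of_fintype _
  rw [h2, Finset.sum_congr rfl (fun b _ => h3 b a)] at e
  have e2 : (⊤ : SimpleGraph (Fin (2*d))).edgeSet.ncard = (2 * d).choose 2 := by
    rw [← coe_edgeFinset, Set.ncard_coe_finset, card_edgeFinset_top_eq_card_choose_two]
    simp
  rw [e2, Nat.choose_two_right] at e
  simp only [Finset.sum_const, Finset.card_univ, Fintype.card_fin, smul_eq_mul] at e
  have e3 : 2 * d * (2 * d - 1) / 2 = d * (2 * d - 1) := by
    rw [mul_assoc, Nat.mul_div_cancel_left _ (by norm_num)]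
  rw [e3] at e
  have := Nat.eq_of_mul_eq_mul_left hd e
  omega

end Helpers

/-- Given a homogeneous cycle-free edge d-partition Γ of K_{2d} and vertices
x < y < z, there is a unique homogeneous cycle-free edge d-partition Λ ≠ Γ
agreeing with Γ on all edges except on the triangle (x,y,z). -/
theorem exists_unique_involution (d : ℕ) (hd : 1 ≤ d)
    (Γ : Fin d → SimpleGraph (Fin (2*d))) (hΓ : IsHCFPartition Γ)
    (x y z : Fin (2*d)) (hxy : x < y) (hyz : y < z) :
    ∃! Λ : Fin d → SimpleGraph (Fin (2*d)),
      IsHCFPartition Λ ∧ Λ ≠ Γ ∧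
      ∀ i j : Fin (2*d), i < j →
        ¬((i = x ∧ j = y) ∨ (i = x ∧ j = z) ∨ (i = y ∧ j = z)) →
        ∀ a : Fin d, (Λ a).Adj i j ↔ (Γ a).Adj i j := by
  classical
  have hxz : x < z := hxy.trans hyz
  set F : Fin d → SimpleGraph (Fin (2*d)) :=
    fun a => (Γ a).deleteEdges {s(x,y), s(x,z), s(y,z)} with hFdef
  have hFadj : ∀ a i j, (F a).Adj i j ↔ (Γ a).Adj i j ∧
      ¬ (s(i,j) = s(x,y) ∨ s(i,j) = s(x,z) ∨ s(i,j) = s(y,z)) := by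
    intro a i j
    simp only [hFdef, deleteEdges_adj, Set.mem_insert_iff, Set.mem_singleton_iff]
  have hNT : ∀ a, NoTri (F a) x y z := fun a =>
    ⟨hxy.ne, hxz.ne, hyz.ne, by simp [hFadj], by simp [hFadj], by simp [hFadj]⟩
  have hFac : ∀ a, (F a).IsAcyclic := fun a => (hΓ.2.2 a).anti (deleteEdges_le _)
  let mk : Fin d → Fin d → Fin d → Fin d → SimpleGraph (Fin (2*d)) :=
    fun p q r a => tg (F a) x y z (p = a) (q = a) (r = a)
  have mk_adj : ∀ p q r a i j, (mk p q r a).Adj i j ↔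
      ((F a).Adj i j ∨ (p = a ∧ s(i,j) = s(x,y)) ∨ (q = a ∧ s(i,j) = s(x,z)) ∨
        (r = a ∧ s(i,j) = s(y,z))) := by
    intro p q r a i j
    have h1 := hxy.ne
    have h2 := hxz.ne
    have h3 := hyz.ne
    simp only [mk, tg, edge_adj, Sym2.eq_iff]
    grind
  have mk_part : ∀ p q r, IsEdgePartition (mk p q r) := by
    intro p q r
    rw [isEdgePartition_iff]
    intro i j hij
    have hG := (isEdgePartition_iff Γ).1 hΓ.1 i j hij
    have h12 : s(x,y) ≠ s(x,z) := by simp; grind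
    have h13 : s(x,y) ≠ s(y,z) := by simp; grind
    have h23 : s(x,z) ≠ s(y,z) := by simp; grind
    simp only [mk_adj, hFadj]
    by_cases k1 : s(i,j) = s(x,y)
    · exact ⟨p, by grind, by grind⟩
    by_cases k2 : s(i,j) = s(x,z)
    · exact ⟨q, by grind, by grind⟩
    by_cases k3 : s(i,j) = s(y,z)
    · exact ⟨r, by grind, by grind⟩
    simpa only [k1, k2, k3, or_self, not_false_eq_true, and_true, and_false, or_false] using hG
  have mk_agree : ∀ p q r, ∀ i j : Fin (2*d), i < j →
        ¬((i = x ∧ j = y) ∨ (i = x ∧ j = z) ∨ (i = y ∧ j = z)) →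
        ∀ a : Fin d, (mk p q r a).Adj i j ↔ (Γ a).Adj i j := by
    intro p q r i j hij hn a
    rw [mk_adj, hFadj]
    simp only [Sym2.eq_iff]
    grind
  have mk_inj : ∀ p q r p' q' r', mk p q r = mk p' q' r' → p = p' ∧ q = q' ∧ r = r' := by
    intro p q r p' q' r' h
    have hp := (isEdgePartition_iff _).1 (mk_part p' q' r')
    refine ⟨(hp x y hxy.ne).unique (h ▸ (mk_adj p q r p x y).2 (by simp)) ((mk_adj ..).2 (by simp)),
      (hp x z hxz.ne).unique (h ▸ (mk_adj p q r q x z).2 (by simp)) ((mk_adj ..).2 (by simp)),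
      (hp y z hyz.ne).unique (h ▸ (mk_adj p q r r y z).2 (by simp)) ((mk_adj ..).2 (by simp))⟩
  have mk_surj : ∀ Λ : Fin d → SimpleGraph (Fin (2*d)), IsEdgePartition Λ →
      (∀ i j : Fin (2*d), i < j →
        ¬((i = x ∧ j = y) ∨ (i = x ∧ j = z) ∨ (i = y ∧ j = z)) →
        ∀ a : Fin d, (Λ a).Adj i j ↔ (Γ a).Adj i j) → ∃ p q r, Λ = mk p q r := by
    intro Λ hΛ hag
    have hp := (isEdgePartition_iff _).1 hΛ
    obtain ⟨p, hp1, hp2⟩ := hp x y hxy.ne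
    obtain ⟨q, hq1, hq2⟩ := hp x z hxz.ne
    obtain ⟨r, hr1, hr2⟩ := hp y z hyz.ne
    refine ⟨p, q, r, ?_⟩
    have key : ∀ a i j, i < j → ((Λ a).Adj i j ↔ (mk p q r a).Adj i j) := by
      intro a i j hij
      by_cases hn : (i = x ∧ j = y) ∨ (i = x ∧ j = z) ∨ (i = y ∧ j = z)
      · rw [mk_adj, hFadj]
        have h12 : s(x,y) ≠ s(x,z) := by simp; grind
        have h13 : s(x,y) ≠ s(y,z) := by simp; grind
        have h23 : s(x,z) ≠ s(y,z) := by simp; grind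
        rcases hn with ⟨rfl, rfl⟩ | ⟨rfl, rfl⟩ | ⟨rfl, rfl⟩ <;> grind
      · rw [hag i j hij hn, mk_agree p q r i j hij hn]
    funext a
    ext i j
    rcases lt_trichotomy i j with h | rfl | h
    · exact key a i j h
    · simp
    · rw [adj_comm, key a j i h, adj_comm]
  obtain ⟨p, q, r, hpqr⟩ := mk_surj Γ hΓ.1 (fun _ _ _ _ _ => Iff.rfl)
  have mk_ac : ∀ p q r, (∀ a, (mk p q r a).IsAcyclic) ↔
      Good (fun a => (F a).Reachable x y) (fun a => (F a).Reachable x z)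
        (fun a => (F a).Reachable y z) p q r := by
    intro p q r
    unfold Good
    exact forall_congr' fun a => tg_acyclic_iff _ _ _ (hFac a) (hNT a)
  have mk_card : ∀ p q r a, (mk p q r a).edgeSet.ncard = _ :=
    fun p q r a => tg_ncard (p = a) (q = a) (r = a) (hNT a)
  have cardΓ : ∀ a, (mk p q r a).edgeSet.ncard + 1 = 2 * d := fun a => by
    rw [← hpqr]; exact hcf_ncard hΓ a
  have mk_hcf : ∀ p' q' r', IsHCFPartition (mk p' q' r') ↔ Rearr p q r p' q' r' ∧
      Good (fun a => (F a).Reachable x y) (fun a => (F a).Reachable x z)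
        (fun a => (F a).Reachable y z) p' q' r' := by
    intro p' q' r'
    rw [← mk_ac, rearr_iff]
    constructor
    · intro h
      refine ⟨fun c => ?_, h.2.2⟩
      have h1 := hcf_ncard h c
      have h2 := cardΓ c
      rw [mk_card] at h1 h2
      omega
    · rintro ⟨h1, h2⟩
      have h3 : ∀ a, (mk p' q' r' a).edgeSet.ncard + 1 = 2 * d := by
        intro a
        have h4 := cardΓ a
        rw [mk_card] at h4 ⊢
        have := h1 a
        omega
      exact ⟨mk_part _ _ _, fun a b => by have := h3 a; have := h3 b; omega, h2⟩
  have hgood := ((mk_hcf p q r).1 (hpqr ▸ hΓ)).2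
  have exists_one : ∀ c, ((if p = c then 1 else 0) + (if q = c then 1 else 0) +
      (if r = c then 1 else 0) : ℕ) = 1 →
      (F c).Reachable x y ∨ (F c).Reachable x z ∨ (F c).Reachable y z := by
    intro c hc
    by_contra! hcon
    obtain ⟨k1, k2, k3⟩ := hcon
    have hac : (tg (F c) x y z True True False).IsAcyclic := by
      rw [tg_acyclic_iff _ _ _ (hFac c) (hNT c)]
      simp [k1, k2, k3]
    have : Nonempty (Fin (2*d)) := ⟨x⟩
    have h1 := acyclic_ncard_le hac
    rw [tg_ncard _ _ _ (hNT c)] at h1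
    have h2 := cardΓ c
    rw [mk_card] at h2
    simp at h1
    split_ifs at h2 hc <;> omega
  obtain ⟨p', q', r', ⟨m1, m2, m3⟩, m4⟩ := comb (fun a => (F a).Reachable x y)
    (fun a => (F a).Reachable x z) (fun a => (F a).Reachable y z) p q r
    (fun c h1 h2 => h1.symm.trans h2) (fun c h1 h2 => h1.trans h2)
    (fun c h1 h2 => h1.trans h2.symm) hgood
    (fun h1 h2 => exists_one p (by simp [h1.symm, h2.symm]))
    (fun h1 h2 => exists_one q (by simp [h1.symm, h2.symm]))
    (fun h1 h2 => exists_one r (by simp [h1.symm, h2.symm]))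
  refine ⟨mk p' q' r', ⟨(mk_hcf _ _ _).2 ⟨m1, m2⟩, ?_, mk_agree _ _ _⟩, ?_⟩
  · intro h
    rw [hpqr] at h
    exact m3 (mk_inj _ _ _ _ _ _ h)
  · rintro Λ ⟨n1, n2, n3⟩
    obtain ⟨p'', q'', r'', rfl⟩ := mk_surj Λ n1.1 n3
    obtain ⟨k1, k2⟩ := (mk_hcf _ _ _).1 n1
    obtain ⟨rfl, rfl, rfl⟩ := m4 p'' q'' r'' ⟨k1, k2, by
      rintro ⟨rfl, rfl, rfl⟩
      exact n2 hpqr.symm⟩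
    rfl
end

section
/- Let A be an S^2-upper triangular d×d(2d-1) matrix over k and let Γ = (Γ_1,...,Γ_d) be a homogeneous cycle-free edge d-partition of the complete graph K_{2d}. Then either Γ = Γ^E or M_Γ(A) = 0. -/
open SimpleGraph

theorem ind_val_eq {d : ℕ} (i j : Fin (2*d)) (h : i < j) :
    ((ind ⟨(i, j), h⟩ : Fin d) : ℕ) =
      if ((i : ℕ) + (j : ℕ)) % 2 = 0 then (i : ℕ) / 2 else (j : ℕ) / 2 := by
  simp only [ind, indF]
  split_ifs <;> rfl

open Finset in
theorem card_ind_fiber {d : ℕ} (a : Fin d) :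
    (univ.filter (fun e : EdgePair d => ind e = a)).card = 2 * d - 1 := by
  have ha := a.isLt
  have h1 : ((univ : Finset (Fin (2*d))).erase ⟨2 * a, by omega⟩).card = 2 * d - 1 := by
    rw [card_erase_of_mem (mem_univ _)]; simp
  rw [← h1]
  symm
  refine card_bij' (fun w hw =>
    if h1 : 2 * (a:ℕ) + 1 < w then ⟨(⟨2 * a + w % 2, by omega⟩, w), by
        simp only [Fin.lt_def]; omega⟩
    else if h2 : (w:ℕ) = 2 * a + 1 then ⟨(⟨2 * a, by omega⟩, w), by
        simp only [Fin.lt_def]; omega⟩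
    else ⟨(w, ⟨2 * a + 1 - w % 2, by omega⟩), by
        simp only [mem_erase, ne_eq, Fin.ext_iff, mem_univ, and_true] at hw
        simp only [Fin.lt_def]; omega⟩)
    (fun e _ => if (e.val.1 : ℕ) / 2 = a then e.val.2 else e.val.1) ?_ ?_ ?_ ?_
  · intro w hw
    simp only [mem_erase, ne_eq, Fin.ext_iff, mem_univ, and_true] at hw
    simp only [mem_filter, mem_univ, true_and, ind, indF, Fin.ext_iff]
    split_ifs <;> simp_all <;> omega
  · rintro ⟨⟨i, j⟩, hij⟩ he
    simp only [mem_filter, mem_univ, true_and, Fin.ext_iff, ind_val_eq] at he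
    have hij' : (i : ℕ) < j := hij
    simp only [mem_erase, ne_eq, Fin.ext_iff, mem_univ, and_true]
    split_ifs at he ⊢ <;> omega
  · intro w hw
    simp only [mem_erase, ne_eq, Fin.ext_iff, mem_univ, and_true] at hw
    simp only [Fin.ext_iff]
    split_ifs <;> simp_all <;> omega
  · rintro ⟨⟨i, j⟩, hij⟩ he
    simp only [mem_filter, mem_univ, true_and, Fin.ext_iff, ind_val_eq] at he
    have hij' : (i : ℕ) < j := hij
    simp only [Subtype.ext_iff, Prod.ext_iff, Fin.ext_iff]
    have he' : (((i : ℕ) + j) % 2 = 0 ∧ (i : ℕ) / 2 = a) ∨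
        (((i : ℕ) + j) % 2 = 1 ∧ (j : ℕ) / 2 = a) := by
      split_ifs at he <;> omega
    clear he
    split_ifs <;> dsimp only at * <;> omega

open Finset in
theorem eq_ind_of_le {d : ℕ} (hd : 1 ≤ d) (c : EdgePair d → Fin d) (m : ℕ)
    (hm : ∀ a, (univ.filter (fun e : EdgePair d => c e = a)).card = m)
    (hle : ∀ e, c e ≤ ind e) : ∀ e, c e = ind e := by
  have t1 : Fintype.card (EdgePair d) = d * m := by
    rw [← card_univ, card_eq_sum_card_fiberwise (f := c) (t := univ) (by simp)]
    simp [hm]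
  have t2 : Fintype.card (EdgePair d) = d * (2 * d - 1) := by
    rw [← card_univ, card_eq_sum_card_fiberwise (f := ind) (t := univ) (by simp)]
    simp [card_ind_fiber]
  have hmm : m = 2 * d - 1 := Nat.eq_of_mul_eq_mul_left (by omega) (t1.symm.trans t2)
  have s1 : ∑ e, ((c e : Fin d) : ℕ) = ∑ e, ((ind e : Fin d) : ℕ) := by
    rw [← sum_fiberwise' univ c (fun a => (a : ℕ)), ← sum_fiberwise' univ ind (fun a => (a : ℕ))]
    simp [hm, card_ind_fiber, hmm]
  have := (sum_eq_sum_iff_of_le (fun e _ => Fin.le_def.1 (hle e))).1 s1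
  intro e
  exact Fin.ext (this e (mem_univ _))

theorem edge_mk_injective {d : ℕ} :
    Function.Injective (fun e : EdgePair d => s(e.val.1, e.val.2)) := by
  rintro ⟨⟨i, j⟩, h⟩ ⟨⟨i', j'⟩, h'⟩ he
  simp only [Sym2.eq_iff] at he
  simp only [Fin.lt_def] at h h'
  simp only [Subtype.mk.injEq, Prod.mk.injEq]
  rcases he with he | ⟨rfl, rfl⟩
  · exact he
  · omega

/-- For an S²-upper triangular matrix A and a homogeneous cycle-free edge
d-partition Γ of K_{2d}, either Γ = Γ^E or M_Γ(A) = 0. -/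
theorem upper_monomial_eq_zero_of_ne_GammaE (k : Type*) [Field k] (d : ℕ) (hd : 1 ≤ d)
    (A : Fin d → EdgePair d → k) (hA : S2UpperTriangular A)
    (Γ : Fin d → SimpleGraph (Fin (2*d))) (hΓ : IsHCFPartition Γ) :
    Γ = (fun a : Fin d => GammaE d a) ∨ MGamma Γ A = 0 := by
  classical
  by_cases hM : MGamma Γ A = 0
  · exact Or.inr hM
  left
  obtain ⟨⟨hdis, hun⟩, hhom, -⟩ := hΓ
  have hex : ∀ e : EdgePair d, ∃ a, (Γ a).Adj e.val.1 e.val.2 := by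
    intro e
    have : s(e.val.1, e.val.2) ∈ ⋃ a : Fin d, (Γ a).edgeSet := by
      rw [hun]; simpa using e.2.ne
    simpa using this
  choose c hc using hex
  have huniq : ∀ a (e : EdgePair d), (Γ a).Adj e.val.1 e.val.2 ↔ c e = a := by
    intro a e
    refine ⟨fun h => ?_, fun h => h ▸ hc e⟩
    by_contra hne
    exact Set.disjoint_left.1 (hdis _ _ hne) (show s(e.val.1, e.val.2) ∈ _ from hc e) h
  have hle : ∀ e, c e ≤ ind e := by
    intro e
    by_contra hlt
    apply hM
    unfold MGamma
    refine Finset.prod_eq_zero (Finset.mem_univ (c e)) (Finset.prod_eq_zero (Finset.mem_univ e) ?_)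
    rw [if_pos (hc e)]
    exact hA _ _ (not_le.1 hlt)
  have hcard : ∀ a, (Finset.univ.filter (fun e : EdgePair d => c e = a)).card
      = (Γ a).edgeSet.ncard := by
    intro a
    rw [← Set.ncard_coe_finset, ← Set.ncard_image_of_injective _ edge_mk_injective]
    congr 1
    ext x
    induction x with | _ i j
    simp only [Finset.coe_filter, Finset.mem_univ, true_and, Set.mem_image, Set.mem_ofPred_eq,
      SimpleGraph.mem_edgeSet]
    constructor
    · rintro ⟨e, he, hx⟩
      have := (huniq a e).2 he
      rwa [← SimpleGraph.mem_edgeSet, hx] at this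
    · intro h
      rcases lt_or_gt_of_ne h.ne with hl | hl
      · exact ⟨⟨(i, j), hl⟩, (huniq a _).1 h, rfl⟩
      · exact ⟨⟨(j, i), hl⟩, (huniq a _).1 h.symm, Sym2.eq_swap⟩
  have hind := eq_ind_of_le hd c (Γ ⟨0, hd⟩).edgeSet.ncard
    (fun a => (hcard a).trans (hhom _ _)) hle
  have key : ∀ a (i j : Fin (2*d)), i < j → ((Γ a).Adj i j ↔ (GammaE d a).Adj i j) := by
    intro a i j hij
    have h1 := huniq a ⟨(i, j), hij⟩
    rw [hind] at h1
    refine h1.trans ?_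
    simp only [GammaE, SimpleGraph.fromEdgeSet_adj, Set.mem_ofPred_eq, ind]
    constructor
    · intro h
      exact ⟨⟨i, j, hij, h, rfl⟩, hij.ne⟩
    · rintro ⟨⟨i', j', hl, h, he⟩, -⟩
      have := @edge_mk_injective d ⟨(i, j), hij⟩ ⟨(i', j'), hl⟩ he
      simp only [Subtype.mk.injEq, Prod.mk.injEq] at this
      rw [this.1, this.2]; exact h
  funext a
  ext i j
  rcases lt_trichotomy i j with h | rfl | h
  · exact key a i j h
  · simp
  · rw [SimpleGraph.adj_comm, key a j i h, SimpleGraph.adj_comm]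
end

section
/- Let A be an S^2-lower triangular d×d(2d-1) matrix over k and let Γ = (Γ_1,...,Γ_d) be a homogeneous cycle-free edge d-partition of the complete graph K_{2d}. Then either Γ = Γ^E or M_Γ(A) = 0. -/
open SimpleGraph

theorem ind_fiber_card {d : ℕ} (a : Fin d) :
    (Finset.univ.filter (fun e : EdgePair d => ind e = a)).card = 2 * d - 1 := by
  have ha := a.isLt
  have h1 : (Finset.univ.erase (⟨2 * a, by omega⟩ : Fin (2*d))).card = 2 * d - 1 := by
    rw [Finset.card_erase_of_mem (Finset.mem_univ _)]; simp
  rw [← h1]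
  refine Finset.card_bij
    (fun e _ => if (e.val.1 : ℕ) / 2 = a ∧ ((e.val.1 : ℕ) = 2 * a ∨
      ((e.val.1 : ℕ) + (e.val.2 : ℕ)) % 2 = 0) then e.val.2 else e.val.1) ?_ ?_ ?_
  · rintro ⟨⟨⟨i, hi⟩, ⟨j, hj⟩⟩, hij⟩ he
    simp only [Finset.mem_filter, Finset.mem_univ, true_and, ind, indF, Fin.ext_iff,
      Finset.mem_erase, and_true, ne_eq, Fin.lt_def] at he hij ⊢
    split_ifs at he ⊢ <;> simp only at he ⊢ <;> omega
  · rintro ⟨⟨⟨i, hi⟩, ⟨j, hj⟩⟩, hij⟩ he ⟨⟨⟨i', hi'⟩, ⟨j', hj'⟩⟩, hij'⟩ he' h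
    simp only [Finset.mem_filter, Finset.mem_univ, true_and, ind, indF, Fin.ext_iff,
      Fin.lt_def] at he he' hij hij' h
    simp only [Subtype.mk.injEq, Prod.mk.injEq, Fin.mk.injEq]
    split_ifs at he he' h <;> simp only at he he' h <;> omega
  · rintro ⟨v, hv⟩ hv'
    simp only [Finset.mem_erase, Finset.mem_univ, and_true, ne_eq, Fin.mk.injEq] at hv'
    have key : ∃ i j : ℕ, i < j ∧ j < 2 * d ∧
        (((i + j) % 2 = 0 ∧ i / 2 = a) ∨ ((i + j) % 2 ≠ 0 ∧ j / 2 = a)) ∧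
        (if i / 2 = a ∧ (i = 2 * a ∨ (i + j) % 2 = 0) then j else i) = v := by
      by_cases h2 : v < 2 * a
      · by_cases h3 : v % 2 = 1
        · refine ⟨v, 2 * a, by omega, by omega, by omega, ?_⟩
          split_ifs <;> omega
        · refine ⟨v, 2 * a + 1, by omega, by omega, by omega, ?_⟩
          split_ifs <;> omega
      · by_cases h3 : v % 2 = 0 ∨ v = 2 * a + 1
        · refine ⟨2 * a, v, by omega, by omega, by omega, ?_⟩
          split_ifs <;> omega
        · refine ⟨2 * a + 1, v, by omega, by omega, by omega, ?_⟩
          split_ifs <;> omega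
    obtain ⟨i, j, hij, hj, h, hv2⟩ := key
    refine ⟨⟨(⟨i, by omega⟩, ⟨j, hj⟩), hij⟩, ?_, ?_⟩
    · simp only [Finset.mem_filter, Finset.mem_univ, true_and, ind, indF, Fin.ext_iff]
      split_ifs <;> simp only <;> omega
    · simp only [Fin.ext_iff]
      split_ifs at hv2 ⊢ <;> simpa using hv2

theorem color_eq_ind {d : ℕ} (hd : 1 ≤ d) (c : EdgePair d → Fin d) (n : ℕ)
    (hn : ∀ a, (Finset.univ.filter (fun e : EdgePair d => c e = a)).card = n)
    (hle : ∀ e, ind e ≤ c e) (e : EdgePair d) : c e = ind e := by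
  have t1 : Fintype.card (EdgePair d) = d * n := by
    rw [← Finset.card_univ, Finset.card_eq_sum_card_fiberwise (f := c) (t := Finset.univ)
      (by simp)]
    simp [hn]
  have t2 : Fintype.card (EdgePair d) = d * (2 * d - 1) := by
    rw [← Finset.card_univ, Finset.card_eq_sum_card_fiberwise (f := ind) (t := Finset.univ)
      (by simp)]
    simp [ind_fiber_card]
  have hnn : n = 2 * d - 1 := Nat.eq_of_mul_eq_mul_left hd (t1.symm.trans t2)
  have hs : ∑ e : EdgePair d, ((ind e : Fin d) : ℕ) = ∑ e : EdgePair d, ((c e : Fin d) : ℕ) := by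
    rw [← Finset.sum_fiberwise' Finset.univ ind (fun a : Fin d => (a : ℕ)),
      ← Finset.sum_fiberwise' Finset.univ c (fun a : Fin d => (a : ℕ))]
    simp [hn, ind_fiber_card, hnn]
  have := (Finset.sum_eq_sum_iff_of_le (f := fun e => ((ind e : Fin d) : ℕ))
    (g := fun e => ((c e : Fin d) : ℕ)) (fun e _ => Fin.le_def.1 (hle e))).1 hs e
    (Finset.mem_univ _)
  exact Fin.ext this.symm

/-- For an S²-lower triangular matrix A and a homogeneous cycle-free edge
d-partition Γ of K_{2d}, either Γ = Γ^E or M_Γ(A) = 0. -/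
theorem lower_monomial_eq_zero_of_ne_GammaE (k : Type*) [Field k] (d : ℕ) (hd : 1 ≤ d)
    (A : Fin d → EdgePair d → k) (hA : S2LowerTriangular A)
    (Γ : Fin d → SimpleGraph (Fin (2*d))) (hΓ : IsHCFPartition Γ) :
    Γ = (fun a : Fin d => GammaE d a) ∨ MGamma Γ A = 0 := by
  classical
  by_cases hM : MGamma Γ A = 0
  · exact Or.inr hM
  left
  obtain ⟨⟨hdis, hun⟩, hhom, -⟩ := hΓ
  have hne : ∀ (a : Fin d) (e : EdgePair d), (Γ a).Adj e.val.1 e.val.2 → ind e ≤ a := by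
    intro a e hae
    by_contra hlt
    apply hM
    unfold MGamma
    refine Finset.prod_eq_zero (Finset.mem_univ a) (Finset.prod_eq_zero (Finset.mem_univ e) ?_)
    rw [if_pos hae]
    exact hA a e (not_le.1 hlt)
  have hex : ∀ e : EdgePair d, ∃ a, (Γ a).Adj e.val.1 e.val.2 := by
    intro e
    have : s(e.val.1, e.val.2) ∈ (⊤ : SimpleGraph (Fin (2*d))).edgeSet := by
      simpa using e.2.ne
    rw [← hun] at this
    simpa using this
  choose c hc using hex
  have hcu : ∀ (a : Fin d) (e : EdgePair d), (Γ a).Adj e.val.1 e.val.2 ↔ c e = a := by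
    intro a e
    refine ⟨fun h => ?_, fun h => h ▸ hc e⟩
    by_contra hca
    exact Set.disjoint_left.1 (hdis _ _ hca) ((SimpleGraph.mem_edgeSet _).2 (hc e))
      ((SimpleGraph.mem_edgeSet _).2 h)
  have hcard : ∀ a, (Finset.univ.filter (fun e : EdgePair d => c e = a)).card
      = (Γ a).edgeSet.ncard := by
    intro a
    rw [← Set.ncard_coe_finset]
    refine Set.ncard_congr (fun e _ => s(e.val.1, e.val.2)) ?_ ?_ ?_
    · intro e he
      simpa [hcu] using he
    · rintro ⟨⟨i, j⟩, hij⟩ ⟨⟨i', j'⟩, hij'⟩ - - h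
      simp only [Sym2.eq_iff] at h
      rcases h with ⟨rfl, rfl⟩ | ⟨rfl, rfl⟩
      · rfl
      · exact absurd hij (not_lt.2 (le_of_lt hij'))
    · intro b hb
      induction b using Sym2.ind with
      | _ x y =>
        rw [SimpleGraph.mem_edgeSet] at hb
        rcases lt_or_gt_of_ne hb.ne with h | h
        · exact ⟨⟨(x, y), h⟩, by simpa using (hcu a ⟨(x, y), h⟩).1 hb, rfl⟩
        · exact ⟨⟨(y, x), h⟩, by simpa using (hcu a ⟨(y, x), h⟩).1 hb.symm, Sym2.eq_swap⟩
  have hci := color_eq_ind hd c (Γ ⟨0, hd⟩).edgeSet.ncard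
    (fun a => (hcard a).trans (hhom _ _)) (fun e => hne _ e (hc e))
  have hlt : ∀ (a : Fin d) (x y : Fin (2*d)), x < y →
      ((Γ a).Adj x y ↔ (GammaE d a).Adj x y) := by
    intro a x y h
    have h1 := hcu a ⟨(x, y), h⟩
    rw [hci] at h1
    refine h1.trans ?_
    simp only [GammaE, SimpleGraph.fromEdgeSet_adj, Set.mem_ofPred_eq, ind]
    constructor
    · intro h2
      exact ⟨⟨x, y, h, h2, rfl⟩, h.ne⟩
    · rintro ⟨⟨i, j, hij, h2, h3⟩, -⟩
      rcases Sym2.eq_iff.1 h3 with ⟨rfl, rfl⟩ | ⟨rfl, rfl⟩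
      · exact h2
      · exact absurd hij (not_lt.2 (le_of_lt h))
  funext a
  ext x y
  rcases lt_trichotomy x y with h | h | h
  · exact hlt a x y h
  · subst h; simp
  · rw [SimpleGraph.adj_comm, hlt a y x h, SimpleGraph.adj_comm]
end

section
/- The matrix I^{S^2}_d is a two-sided multiplicative unit for the Leg Identifying Multiplication: for every d×d(2d-1) matrix A over k, I^{S^2}_d ⊙ A = A and A ⊙ I^{S^2}_d = A. -/
def mkEdge {d : ℕ} (i j : ℕ) (hi : i < 2*d) (hj : j < 2*d) (hij : i < j) : EdgePair d :=
  ⟨(⟨i, hi⟩, ⟨j, hj⟩), Fin.mk_lt_mk.mpr hij⟩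

/-- The central edge `(2a-1, 2a)` of the twin star `TS_d(2a-1, 2a)` (0-based `a`). -/
def centerEdge {d : ℕ} (a : Fin d) : EdgePair d :=
  mkEdge (2*a) (2*a+1) (by have := a.isLt; omega) (by have := a.isLt; omega) (by omega)

/-- The left leg of the twin star `TS_d(2a-1, 2a)` with leg number `n + 1`
(both `a` and `n` 0-based): left legs are enumerated in increasing order of their
endpoint different from `2a - 1`. -/
def leftLeg {d : ℕ} (a : Fin d) (n : Fin (d-1)) : EdgePair d :=
  if h : (n : ℕ) < (a : ℕ) then
    mkEdge (2*n+1) (2*a) (by have := n.isLt; omega) (by have := a.isLt; omega) (by omega)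
  else
    mkEdge (2*a) (2*n+2) (by have := a.isLt; omega) (by have := n.isLt; omega) (by omega)

/-- The right leg of the twin star `TS_d(2a-1, 2a)` with leg number `n + 1`
(both `a` and `n` 0-based): right legs are enumerated in increasing order of their
endpoint different from `2a`. -/
def rightLeg {d : ℕ} (a : Fin d) (n : Fin (d-1)) : EdgePair d :=
  if h : (n : ℕ) < (a : ℕ) then
    mkEdge (2*n) (2*a+1) (by have := n.isLt; omega) (by have := a.isLt; omega) (by omega)
  else
    mkEdge (2*a+1) (2*n+3) (by have := a.isLt; omega) (by have := n.isLt; omega) (by omega)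

/-- The central leg submatrix `A^C`: its `a`-th column is the column of `A` indexed by
`(2a-1, 2a)`. -/
def legC {d : ℕ} {k : Type*} [Field k] (A : Fin d → EdgePair d → k) :
    Matrix (Fin d) (Fin d) k :=
  Matrix.of fun r a => A r (centerEdge a)

/-- The left leg submatrix `A^L_n`: its `a`-th column is the column of `A` indexed by the
left leg of `TS_d(2a-1, 2a)` with leg number `n`. -/
def legL {d : ℕ} {k : Type*} [Field k] (A : Fin d → EdgePair d → k) (n : Fin (d-1)) :
    Matrix (Fin d) (Fin d) k :=
  Matrix.of fun r a => A r (leftLeg a n)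

/-- The right leg submatrix `A^R_n`: its `a`-th column is the column of `A` indexed by the
right leg of `TS_d(2a-1, 2a)` with leg number `n`. -/
def legR {d : ℕ} {k : Type*} [Field k] (A : Fin d → EdgePair d → k) (n : Fin (d-1)) :
    Matrix (Fin d) (Fin d) k :=
  Matrix.of fun r a => A r (rightLeg a n)

/-- The Leg Identifying Multiplication `A ⊙ B`: each column, indexed by an edge `e` of
`K_{2d}`, is classified as the central edge, a left leg, or a right leg (with its leg
number `n`) of the twin star it belongs to, say `TS_d(2a-1,2a)`; the corresponding column
of `A ⊙ B` is the `a`-th column of the ordinary matrix product of the corresponding leg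
submatrices of `A` and `B`. -/
def LIM {d : ℕ} {k : Type*} [Field k] (A B : Fin d → EdgePair d → k) :
    Fin d → EdgePair d → k := fun r e =>
  have hij : (e.val.1 : ℕ) < (e.val.2 : ℕ) := e.prop
  have hi : (e.val.1 : ℕ) < 2*d := e.val.1.isLt
  have hj : (e.val.2 : ℕ) < 2*d := e.val.2.isLt
  if h1 : (e.val.1 : ℕ) % 2 = 0 then
    if h2 : (e.val.2 : ℕ) % 2 = 1 then
      if h3 : (e.val.2 : ℕ) = (e.val.1 : ℕ) + 1 then
        -- the central edge (2a-1, 2a) with (0-based) a = i/2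
        (legC A * legC B) r ⟨(e.val.1 : ℕ) / 2, by omega⟩
      else
        -- a right leg (2a'-1, 2a) : star (0-based) a = j/2, leg number (0-based) i/2
        (legR A ⟨(e.val.1 : ℕ) / 2, by omega⟩ * legR B ⟨(e.val.1 : ℕ) / 2, by omega⟩)
          r ⟨(e.val.2 : ℕ) / 2, by omega⟩
    else
      -- a left leg (2a-1, 2c-1) : star (0-based) a = i/2, leg number (0-based) j/2 - 1
      (legL A ⟨(e.val.2 : ℕ) / 2 - 1, by omega⟩ * legL B ⟨(e.val.2 : ℕ) / 2 - 1, by omega⟩)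
        r ⟨(e.val.1 : ℕ) / 2, by omega⟩
  else
    if h2 : (e.val.2 : ℕ) % 2 = 0 then
      -- a left leg (2a', 2a-1) : star (0-based) a = j/2, leg number (0-based) i/2
      (legL A ⟨(e.val.1 : ℕ) / 2, by omega⟩ * legL B ⟨(e.val.1 : ℕ) / 2, by omega⟩)
        r ⟨(e.val.2 : ℕ) / 2, by omega⟩
    else
      -- a right leg (2a, 2c) : star (0-based) a = i/2, leg number (0-based) j/2 - 1
      (legR A ⟨(e.val.2 : ℕ) / 2 - 1, by omega⟩ * legR B ⟨(e.val.2 : ℕ) / 2 - 1, by omega⟩)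
        r ⟨(e.val.1 : ℕ) / 2, by omega⟩

theorem indF_val {d : ℕ} (i j : Fin (2*d)) : (indF i j : ℕ) =
    if ((i : ℕ) + (j : ℕ)) % 2 = 0 then (i : ℕ) / 2 else (j : ℕ) / 2 := by
  unfold indF
  split <;> rfl

theorem legC_IS2 (d : ℕ) (k : Type*) [Field k] : legC (IS2 d k) = 1 := by
  ext r a
  have h : ind (centerEdge a) = a := by
    apply Fin.ext
    simp only [ind, indF_val, centerEdge, mkEdge]
    split_ifs <;> omega
  simp [legC, IS2, h, Matrix.one_apply]

theorem legL_IS2 (d : ℕ) (k : Type*) [Field k] (n : Fin (d-1)) : legL (IS2 d k) n = 1 := by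
  ext r a
  have h : ind (leftLeg a n) = a := by
    apply Fin.ext
    unfold leftLeg
    split_ifs <;> simp only [ind, indF_val, mkEdge] <;> split_ifs <;> omega
  simp [legL, IS2, h, Matrix.one_apply]

theorem legR_IS2 (d : ℕ) (k : Type*) [Field k] (n : Fin (d-1)) : legR (IS2 d k) n = 1 := by
  ext r a
  have h : ind (rightLeg a n) = a := by
    apply Fin.ext
    unfold rightLeg
    split_ifs <;> simp only [ind, indF_val, mkEdge] <;> split_ifs <;> omega
  simp [legR, IS2, h, Matrix.one_apply]

theorem mkEdge_eq {d : ℕ} (e : EdgePair d) (i j : ℕ) (hi : i < 2*d) (hj : j < 2*d)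
    (hij : i < j) (h1 : i = e.val.1) (h2 : j = e.val.2) : mkEdge i j hi hj hij = e := by
  apply Subtype.ext
  apply Prod.ext
  · exact Fin.ext h1
  · exact Fin.ext h2

/-- The matrix form of E^(2)_d is a two-sided unit for the Leg Identifying
Multiplication. -/
theorem IS2_LIM_unit (k : Type*) [Field k] (d : ℕ) (hd : 1 ≤ d)
    (A : Fin d → EdgePair d → k) :
    LIM (IS2 d k) A = A ∧ LIM A (IS2 d k) = A := by
  constructor
  all_goals
    funext r e
    have hij : (e.val.1 : ℕ) < (e.val.2 : ℕ) := e.prop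
    simp only [LIM, legC_IS2, legL_IS2, legR_IS2, one_mul, mul_one]
    split_ifs <;> simp only [legC, legL, legR, Matrix.of_apply] <;> congr 1
    · apply mkEdge_eq <;> simp only <;> omega
    · unfold rightLeg
      rw [dif_pos (by simp only; omega)]
      apply mkEdge_eq <;> simp only <;> omega
    · unfold leftLeg
      rw [dif_neg (by simp only; omega)]
      apply mkEdge_eq <;> simp only <;> omega
    · unfold leftLeg
      rw [dif_pos (by simp only; omega)]
      apply mkEdge_eq <;> simp only <;> omega
    · unfold rightLeg
      rw [dif_neg (by simp only; omega)]
      apply mkEdge_eq <;> simp only <;> omega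
end

section
/- If A and B are S^2-upper triangular d×d(2d-1) matrices over k, then A⊙B is S^2-upper triangular; thus the set U^{S^2}_d of S^2-upper triangular d×d(2d-1) matrices is closed under the Leg Identifying Multiplication. -/
lemma ind_mkEdge {d : ℕ} (i j : ℕ) (hi : i < 2*d) (hj : j < 2*d) (hij : i < j) :
    ((ind (mkEdge i j hi hj hij) : Fin d) : ℕ) = if (i + j) % 2 = 0 then i / 2 else j / 2 := by
  unfold ind indF mkEdge
  by_cases h : (i + j) % 2 = 0
  · rw [if_pos h, if_pos h]
  · rw [if_neg h, if_neg h]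

lemma ind_center {d : ℕ} (a : Fin d) : ind (centerEdge a) = a := by
  apply Fin.ext
  unfold centerEdge
  rw [ind_mkEdge]
  split_ifs <;> omega

lemma ind_left {d : ℕ} (a : Fin d) (n : Fin (d-1)) : ind (leftLeg a n) = a := by
  apply Fin.ext
  unfold leftLeg
  split_ifs <;> rw [ind_mkEdge] <;> split_ifs <;> omega

lemma ind_right {d : ℕ} (a : Fin d) (n : Fin (d-1)) : ind (rightLeg a n) = a := by
  apply Fin.ext
  unfold rightLeg
  split_ifs <;> rw [ind_mkEdge] <;> split_ifs <;> omega

lemma mul_upper {d : ℕ} {k : Type*} [Field k] (M N : Matrix (Fin d) (Fin d) k)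
    (hM : ∀ r a, a < r → M r a = 0) (hN : ∀ r a, a < r → N r a = 0)
    (r a : Fin d) (h : a < r) : (M * N) r a = 0 := by
  rw [Matrix.mul_apply]
  apply Finset.sum_eq_zero
  intro x _
  by_cases hx : x < r
  · rw [hM r x hx, zero_mul]
  · rw [hN x a (lt_of_lt_of_le h (not_lt.mp hx)), mul_zero]

lemma legC_upper {d : ℕ} {k : Type*} [Field k] {A : Fin d → EdgePair d → k}
    (hA : S2UpperTriangular A) (r a : Fin d) (h : a < r) : legC A r a = 0 :=
  hA r _ (by rwa [ind_center])

lemma legL_upper {d : ℕ} {k : Type*} [Field k] {A : Fin d → EdgePair d → k}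
    (hA : S2UpperTriangular A) (n : Fin (d-1)) (r a : Fin d) (h : a < r) : legL A n r a = 0 :=
  hA r _ (by rwa [ind_left])

lemma legR_upper {d : ℕ} {k : Type*} [Field k] {A : Fin d → EdgePair d → k}
    (hA : S2UpperTriangular A) (n : Fin (d-1)) (r a : Fin d) (h : a < r) : legR A n r a = 0 :=
  hA r _ (by rwa [ind_right])

/-- The set of S²-upper triangular matrices is closed under the Leg Identifying
Multiplication. -/
theorem LIM_upper_triangular (k : Type*) [Field k] (d : ℕ) (hd : 1 ≤ d)
    (A B : Fin d → EdgePair d → k)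
    (hA : S2UpperTriangular A) (hB : S2UpperTriangular B) :
    S2UpperTriangular (LIM A B) := by
  intro r e h
  have hij : (e.val.1 : ℕ) < (e.val.2 : ℕ) := e.prop
  have h' : ((ind e : Fin d) : ℕ) < r := h
  simp only [ind, indF] at h'
  unfold LIM
  dsimp only
  split_ifs
  · apply mul_upper _ _ (legC_upper hA) (legC_upper hB)
    rw [Fin.lt_def]; split_ifs at h' <;> simp only [] at h' ⊢ <;> omega
  · apply mul_upper _ _ (legR_upper hA _) (legR_upper hB _)
    rw [Fin.lt_def]; split_ifs at h' <;> simp only [] at h' ⊢ <;> omega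
  · apply mul_upper _ _ (legL_upper hA _) (legL_upper hB _)
    rw [Fin.lt_def]; split_ifs at h' <;> simp only [] at h' ⊢ <;> omega
  · apply mul_upper _ _ (legL_upper hA _) (legL_upper hB _)
    rw [Fin.lt_def]; split_ifs at h' <;> simp only [] at h' ⊢ <;> omega
  · apply mul_upper _ _ (legR_upper hA _) (legR_upper hB _)
    rw [Fin.lt_def]; split_ifs at h' <;> simp only [] at h' ⊢ <;> omega
end
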